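/- (Lemme 9) Let k be a finite field of odd characteristic, let α ∈ k be a non-square, and let δ₁, δ₂ ∈ k be nonzero elements with δ₁² ≠ δ₂². Assume that −1 is not a square in k. Then there exist nonzero ξ, η, ζ ∈ k such that ξ² − α·δ₁² = α·η² and ξ² − α·δ₂² = α·ζ². -/

import Mathlib

/-!
Since `-1` and `α` are non-squares, `α = -c²` for some `c ≠ 0`, and after the substitution `ξ = c y`
the system reads `y² + δ₁² = -η²`, `y² + δ₂² = -ζ²`. Let `χ` be the quadratic character and put
`a = δ₁²`, `b = δ₂²`. It is enough to find `x` with `χ x ≠ -1`, `χ (x + a) ≠ 1` and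
`χ (x + b) ≠ 1`: as `-1` is a non-square, a vanishing value of `χ` at any of the three arguments
would contradict these conditions. Such an `x` exists because
`∑ x, (1 + χ x) (1 - χ (x + a)) (1 - χ (x + b)) = q + 1 + ∑ x, χ (x (x + a) (x + b))`, where `q = #k`,
and the last sum is trivially at least `-q`. The expansion uses the evaluation
`∑ x, χ (x + a) χ (x + b) = -1` for `a ≠ b`, a Jacobi sum.
-/

open Classical in
theorem sum_quadraticChar_add {k : Type*} [Field k] [Fintype k] (hchar : ringChar k ≠ 2) (a : k) :
    ∑ x : k, quadraticChar k (x + a) = 0 := by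
  rw [← quadraticChar_sum_zero hchar]
  exact Equiv.sum_comp (Equiv.addRight a) (fun x => quadraticChar k x)

open Classical in
/-- An affine change of variable turns the sum into the Jacobi sum `J(χ, χ⁻¹) = -χ(-1)`. -/
theorem sum_quadraticChar_mul {k : Type*} [Field k] [Fintype k] (hchar : ringChar k ≠ 2)
    {a b : k} (hab : a ≠ b) :
    ∑ x : k, quadraticChar k (x + a) * quadraticChar k (x + b) = -1 := by
  have hd : a - b ≠ 0 := sub_ne_zero.mpr hab
  have hJ := jacobiSum_nontrivial_inv (quadraticChar_ne_one hchar)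
  rw [(quadraticChar_isQuadratic k).inv, jacobiSum] at hJ
  have e := Equiv.sum_comp ((Equiv.mulLeft₀ (a - b) hd).trans (Equiv.subRight a))
    (fun x => quadraticChar k (x + a) * quadraticChar k (x + b))
  have hm : quadraticChar k (-1) * quadraticChar k (-1) = 1 := by
    rw [← map_mul]; simp
  rw [← e]
  have h : ∀ u : k, quadraticChar k ((a - b) * u - a + a) * quadraticChar k ((a - b) * u - a + b)
      = quadraticChar k (-1) * (quadraticChar k u * quadraticChar k (1 - u)) := by
    intro u
    have h2 := quadraticChar_sq_one hd
    rw [show (a - b) * u - a + a = (a - b) * u by ring,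
      show (a - b) * u - a + b = -1 * (a - b) * (1 - u) by ring, map_mul, map_mul, map_mul]
    linear_combination (quadraticChar k (-1) * quadraticChar k u * quadraticChar k (1 - u)) * h2
  refine (Finset.sum_congr rfl (fun u _ => h u)).trans ?_
  rw [← Finset.mul_sum, hJ]
  linear_combination -hm

open Classical in
theorem neg_one_le_quadraticChar {k : Type*} [Field k] [Fintype k] (x : k) :
    -1 ≤ quadraticChar k x := by
  rcases quadraticChar_isQuadratic k x with h | h | h <;> omega

open Classical in
theorem exists_quadraticChar_ne {k : Type*} [Field k] [Fintype k] (hchar : ringChar k ≠ 2)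
    {a b : k} (ha : a ≠ 0) (hb : b ≠ 0) (hab : a ≠ b) :
    ∃ x : k, quadraticChar k x ≠ -1 ∧ quadraticChar k (x + a) ≠ 1 ∧
      quadraticChar k (x + b) ≠ 1 := by
  by_contra! hcon
  have h0 : ∑ x : k, (1 + quadraticChar k x) * (1 - quadraticChar k (x + a)) *
      (1 - quadraticChar k (x + b)) = 0 := by
    refine Finset.sum_eq_zero fun x _ => ?_
    by_cases h1 : quadraticChar k x = -1
    · simp [h1]
    by_cases h2 : quadraticChar k (x + a) = 1
    · simp [h2]
    simp [hcon x h1 h2]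
  have hx : ∀ x : k, (1 + quadraticChar k x) * (1 - quadraticChar k (x + a)) *
      (1 - quadraticChar k (x + b)) =
      1 + quadraticChar k x - quadraticChar k (x + a) - quadraticChar k (x + b)
      - quadraticChar k (x + 0) * quadraticChar k (x + a)
      - quadraticChar k (x + 0) * quadraticChar k (x + b)
      + quadraticChar k (x + a) * quadraticChar k (x + b)
      + quadraticChar k (x * (x + a) * (x + b)) := by
    intro x
    rw [map_mul, map_mul, add_zero]
    ring
  rw [Finset.sum_congr rfl (fun x _ => hx x)] at h0
  simp only [Finset.sum_add_distrib, Finset.sum_sub_distrib] at h0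
  rw [quadraticChar_sum_zero hchar, sum_quadraticChar_add hchar, sum_quadraticChar_add hchar,
    sum_quadraticChar_mul hchar ha.symm, sum_quadraticChar_mul hchar hb.symm,
    sum_quadraticChar_mul hchar hab] at h0
  have hS : ∑ x : k, (-1 : ℤ) ≤ ∑ x : k, quadraticChar k (x * (x + a) * (x + b)) :=
    Finset.sum_le_sum fun x _ => neg_one_le_quadraticChar _
  simp only [Finset.sum_neg_distrib] at hS
  linarith

open Classical in
/-- If `-1` is a non-square, the negative of a non-square is a square. -/
theorem isSquare_neg_of_not_isSquare {k : Type*} [Field k] [Fintype k]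
    (hm1 : ¬ IsSquare (-1 : k)) {x : k} (hx : ¬ IsSquare x) : IsSquare (-x) := by
  have hx0 : x ≠ 0 := fun h => hx (h ▸ IsSquare.zero)
  rw [← quadraticChar_one_iff_isSquare (neg_ne_zero.mpr hx0), neg_eq_neg_one_mul, map_mul,
    quadraticChar_neg_one_iff_not_isSquare.mpr hm1, quadraticChar_neg_one_iff_not_isSquare.mpr hx]
  norm_num

/-- (Lemme 9) Over a finite field of odd characteristic in which `−1` is not a square,
with `α` a non-square and `δ₁, δ₂` nonzero with `δ₁² ≠ δ₂²`, there exist nonzero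
`ξ, η, ζ` with `ξ² − α·δ₁² = α·η²` and `ξ² − α·δ₂² = α·ζ²`. -/
theorem lemme9 {k : Type*} [Field k] [Fintype k] (hchar : ringChar k ≠ 2)
    (α : k) (hα : ¬ IsSquare α) (δ₁ δ₂ : k) (hδ₁ : δ₁ ≠ 0) (hδ₂ : δ₂ ≠ 0)
    (hne : δ₁ ^ 2 ≠ δ₂ ^ 2) (hm1 : ¬ IsSquare (-1 : k)) :
    ∃ ξ η ζ : k, ξ ≠ 0 ∧ η ≠ 0 ∧ ζ ≠ 0 ∧
      ξ ^ 2 - α * δ₁ ^ 2 = α * η ^ 2 ∧ ξ ^ 2 - α * δ₂ ^ 2 = α * ζ ^ 2 := by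
  classical
  obtain ⟨x, h1, h2, h3⟩ := exists_quadraticChar_ne hchar (pow_ne_zero 2 hδ₁)
    (pow_ne_zero 2 hδ₂) hne
  rw [Ne, quadraticChar_neg_one_iff_not_isSquare, not_not] at h1
  obtain ⟨y, rfl⟩ := h1
  -- `y² + d²` cannot vanish for `d ≠ 0`, since `-1` is a non-square.
  have key : ∀ d : k, d ≠ 0 → y * y + d ^ 2 ≠ 0 := by
    intro d hd h
    refine hm1 ⟨y / d, ?_⟩
    field_simp
    linear_combination -h
  have root : ∀ d : k, d ≠ 0 → quadraticChar k (y * y + d ^ 2) ≠ 1 →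
      ∃ e : k, e ≠ 0 ∧ -(y * y + d ^ 2) = e * e := by
    intro d hd h
    rw [Ne, quadraticChar_one_iff_isSquare (key d hd)] at h
    obtain ⟨e, he⟩ := isSquare_neg_of_not_isSquare hm1 h
    refine ⟨e, ?_, he⟩
    rintro rfl
    exact key d hd (by linear_combination -he)
  obtain ⟨η, hη, h2⟩ := root δ₁ hδ₁ h2
  obtain ⟨ζ, hζ, h3'⟩ := root δ₂ hδ₂ h3
  obtain ⟨c, hc⟩ := isSquare_neg_of_not_isSquare hm1 hα
  have hc0 : c ≠ 0 := by
    rintro rfl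
    exact hα ⟨0, by linear_combination -hc⟩
  have hy0 : y ≠ 0 := by
    rintro rfl
    refine h3 ?_
    rw [mul_zero, zero_add, quadraticChar_sq_one' hδ₂]
  refine ⟨c * y, η, ζ, mul_ne_zero hc0 hy0, hη, hζ, ?_, ?_⟩
  · linear_combination -y ^ 2 * hc + α * h2
  · linear_combination -y ^ 2 * hc + α * h3'
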